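/- Let H be a mass linear function on a simple polytope Δ ⊂ ℝⁿ (i.e. κ ↦ ⟨H, c_Δ(κ)⟩ is affine-linear on the chamber). Then every H-asymmetric facet of Δ is either pervasive (meets every other facet) or flat (the conormals of all other facets meeting it lie in a hyperplane). -/

import Mathlib

open MeasureTheory Function Set

noncomputable section

namespace MassLinearPaper

def dotp {n : ℕ} (v x : Fin n → ℝ) : ℝ := ∑ j, v j * x j

def polytope {n N : ℕ} (η : Fin N → Fin n → ℝ) (κ : Fin N → ℝ) : Set (Fin n → ℝ) :=
  {x | ∀ i, dotp (η i) x ≤ κ i}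

def facet {n N : ℕ} (η : Fin N → Fin n → ℝ) (κ : Fin N → ℝ) (i : Fin N) : Set (Fin n → ℝ) :=
  {x ∈ polytope η κ | dotp (η i) x = κ i}

/-- A polytope is simple if at each point the active conormals are linearly independent. -/
def IsSimplePoly {n N : ℕ} (η : Fin N → Fin n → ℝ) (κ : Fin N → ℝ) : Prop :=
  ∀ x ∈ polytope η κ,
    LinearIndependent ℝ (fun i : {i : Fin N // dotp (η i) x = κ i} => η i.1)

/-- Two support vectors give analogous polytopes: the same collections of facets intersect. -/
def Analogous {n N : ℕ} (η : Fin N → Fin n → ℝ) (κ κ' : Fin N → ℝ) : Prop :=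
  ∀ I : Finset (Fin N),
    (⋂ i ∈ I, facet η κ' i).Nonempty ↔ (⋂ i ∈ I, facet η κ i).Nonempty

/-- The chamber of Δ(κ). -/
def chamber {n N : ℕ} (η : Fin N → Fin n → ℝ) (κ : Fin N → ℝ) : Set (Fin N → ℝ) :=
  connectedComponentIn {κ' | IsSimplePoly η κ' ∧ Analogous η κ κ'} κ

/-- Standing hypotheses: simple, bounded, nonempty interior, all facets nonempty. -/
def GoodPolytope {n N : ℕ} (η : Fin N → Fin n → ℝ) (κ : Fin N → ℝ) : Prop :=
  IsSimplePoly η κ ∧ Bornology.IsBounded (polytope η κ) ∧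
    (interior (polytope η κ)).Nonempty ∧ ∀ i, (facet η κ i).Nonempty

/-- The center of mass of Δ(κ). -/
def centroid {n N : ℕ} (η : Fin N → Fin n → ℝ) (κ : Fin N → ℝ) : Fin n → ℝ :=
  ⨍ x in polytope η κ, x

/-- The volume of Δ(κ) as a function of κ. -/
def volFn {n N : ℕ} (η : Fin N → Fin n → ℝ) : (Fin N → ℝ) → ℝ :=
  fun κ => (volume (polytope η κ)).toReal

/-- Partial derivative with respect to the i-th support number. -/
def pd {N : ℕ} (i : Fin N) (f : (Fin N → ℝ) → ℝ) : (Fin N → ℝ) → ℝ :=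
  fun κ => fderiv ℝ f κ (Pi.single i 1)

def face {n N : ℕ} (η : Fin N → Fin n → ℝ) (κ : Fin N → ℝ) (S : Finset (Fin N)) :
    Set (Fin n → ℝ) :=
  ⋂ i ∈ S, facet η κ i

/-- Centroid of a face with respect to Hausdorff measure of the appropriate dimension. -/
def faceCentroid {n N : ℕ} (η : Fin N → Fin n → ℝ) (κ : Fin N → ℝ) (S : Finset (Fin N)) :
    Fin n → ℝ :=
  ⨍ x in face η κ S, x ∂(μH[(n : ℝ) - S.card])

/-- The facet `F i` is H-symmetric: `⟨H, c(κ)⟩` does not depend on `κ i` on the chamber. -/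
def SymmFacet {n N : ℕ} (η : Fin N → Fin n → ℝ) (κ : Fin N → ℝ) (H : Fin n → ℝ)
    (i : Fin N) : Prop :=
  ∀ κ₁ ∈ chamber η κ, ∀ κ₂ ∈ chamber η κ, (∀ j, j ≠ i → κ₁ j = κ₂ j) →
    dotp H (centroid η κ₁) = dotp H (centroid η κ₂)

/-- H is mass linear with coefficients γ and constant C. -/
def MassLinear {n N : ℕ} (η : Fin N → Fin n → ℝ) (κ : Fin N → ℝ) (H : Fin n → ℝ)
    (γ : Fin N → ℝ) (C : ℝ) : Prop :=
  ∀ κ' ∈ chamber η κ, dotp H (centroid η κ') = ∑ i, γ i * κ' i + C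

/-- A facet is pervasive if it meets every other facet. -/
def Pervasive {n N : ℕ} (η : Fin N → Fin n → ℝ) (κ : Fin N → ℝ) (i : Fin N) : Prop :=
  ∀ j, j ≠ i → (facet η κ i ∩ facet η κ j).Nonempty

/-- A facet is flat if the conormals of all other facets meeting it lie in a hyperplane. -/
def FlatFacet {n N : ℕ} (η : Fin N → Fin n → ℝ) (κ : Fin N → ℝ) (i : Fin N) : Prop :=
  ∃ ξ : Fin n → ℝ, ξ ≠ 0 ∧
    ∀ j, j ≠ i → (facet η κ i ∩ facet η κ j).Nonempty → dotp (η j) ξ = 0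

/-- Equivalence of facets, via the criterion of Lemma 4.4. -/
def FacetEquiv {n N : ℕ} (η : Fin N → Fin n → ℝ) (i j : Fin N) : Prop :=
  i = j ∨ ∃ ξ : Fin n → ℝ, dotp (η i) ξ = 1 ∧ dotp (η j) ξ = -1 ∧
    ∀ k, k ≠ i → k ≠ j → dotp (η k) ξ = 0

def IsEquivClass {n N : ℕ} (η : Fin N → Fin n → ℝ) (I : Finset (Fin N)) : Prop :=
  I.Nonempty ∧ (∀ i ∈ I, ∀ j ∈ I, FacetEquiv η i j) ∧
    ∀ i ∈ I, ∀ j, FacetEquiv η i j → j ∈ I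

/-- H is inessential. -/
def Inessential {n N : ℕ} (η : Fin N → Fin n → ℝ) (H : Fin n → ℝ) : Prop :=
  ∃ β : Fin N → ℝ, H = ∑ i, β i • η i ∧
    ∀ I : Finset (Fin N), IsEquivClass η I → ∑ i ∈ I, β i = 0

end MassLinearPaper

open MassLinearPaper

/-!
Suppose that the facets `F i` and `F j` are disjoint. For every analogous polytope, the slabs cut
off by moving `F i` and `F j` slightly inwards are then disjoint as well, so the mixed second
differences in `κ i` and `κ j` of the volume and of the first moment `∫ ⟨H, x⟩` vanish. Since the
first moment is the volume times the affine function `⟨H, c⟩`, this gives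
`γ i * vol (slab at F j) + γ j * vol (slab at F i) = 0`, and moving `F i` does not change the slab
at `F j`. If `γ i ≠ 0`, then also `γ j ≠ 0`, so the volume of the slab at `F i` does not change when
`F i` is moved in parallel.

Taking differences in the other support numbers, the same invariance holds for the part of the slab
near any edge of `F i`. Moving `F i` translates the line of such an edge by a vector `ξ` with
`⟨η i, ξ⟩ = 1`, chosen to respect all facets at one end of the edge; the length of the edge, hence
the volume near it, can stay the same only if `ξ` respects the facet at the other end too. The
edges connect all vertices of `F i`, so a single `ξ ≠ 0` is orthogonal to the conormals of all other
facets meeting `F i`.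
-/

namespace MassLinearPaper

variable {n N : ℕ} {η : Fin N → Fin n → ℝ} {κ κ' : Fin N → ℝ}

section Functional

variable (v x y : Fin n → ℝ)

lemma dotp_zero : dotp v 0 = 0 := dotProduct_zero v

lemma dotp_add : dotp v (x + y) = dotp v x + dotp v y := dotProduct_add v x y

lemma dotp_sub : dotp v (x - y) = dotp v x - dotp v y := dotProduct_sub v x y

lemma dotp_neg : dotp v (-x) = -dotp v x := dotProduct_neg v x

lemma dotp_smul (t : ℝ) : dotp v (t • x) = t * dotp v x := dotProduct_smul t v x

lemma dotp_sum {ι : Type*} (s : Finset ι) (f : ι → Fin n → ℝ) :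
    dotp v (∑ k ∈ s, f k) = ∑ k ∈ s, dotp v (f k) := dotProduct_sum v s f

lemma sum_dotp {ι : Type*} (s : Finset ι) (f : ι → Fin n → ℝ) :
    dotp (∑ k ∈ s, f k) x = ∑ k ∈ s, dotp (f k) x := sum_dotProduct s f x

/-- The functional `dotp v`, bundled so that the library results on linear functionals apply. -/
def dotpCLM : (Fin n → ℝ) →L[ℝ] ℝ :=
  LinearMap.toContinuousLinearMap
    { toFun := dotp v, map_add' := dotp_add v, map_smul' := fun t x => dotp_smul v x t }

@[fun_prop]
lemma continuous_dotp : Continuous (dotp v) := (dotpCLM v).continuous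

lemma exists_dotp_eq_of_linearIndependent {ι : Type*} {v : ι → Fin n → ℝ}
    (h : LinearIndependent ℝ v) (c : ι → ℝ) : ∃ d, ∀ k, dotp (v k) d = c k := by
  have : Finite ι := h.finite
  have := Fintype.ofFinite ι
  have hrank : (Matrix.of v).rank = Fintype.card ι := LinearIndependent.rank_matrix h
  have hrange : LinearMap.range (Matrix.of v).mulVecLin = ⊤ :=
    Submodule.eq_top_of_finrank_eq <| by
      rw [← Matrix.rank, hrank, Module.finrank_fintype_fun_eq_card]
  obtain ⟨d, hd⟩ := LinearMap.range_eq_top.1 hrange c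
  exact ⟨d, congrFun hd⟩

end Functional

section Polytope

lemma isClosed_setOf_mem_polytope (η : Fin N → Fin n → ℝ) :
    IsClosed {q : (Fin N → ℝ) × (Fin n → ℝ) | q.2 ∈ polytope η q.1} := by
  have hforall : {q : (Fin N → ℝ) × (Fin n → ℝ) | q.2 ∈ polytope η q.1} =
      ⋂ k, {q | dotp (η k) q.2 ≤ q.1 k} := by
    ext q
    simp only [polytope, mem_ofPred_eq, mem_iInter]
  rw [hforall]
  exact isClosed_iInter fun k => isClosed_le (by fun_prop) (by fun_prop)

lemma isClosed_polytope (η : Fin N → Fin n → ℝ) (κ : Fin N → ℝ) : IsClosed (polytope η κ) :=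
  (isClosed_setOf_mem_polytope η).preimage (Continuous.prodMk_right κ)

lemma convex_polytope (η : Fin N → Fin n → ℝ) (κ : Fin N → ℝ) : Convex ℝ (polytope η κ) := by
  simp only [polytope, ofPred_forall]
  exact convex_iInter fun k => convex_halfSpace_le (dotpCLM (η k)).toLinearMap.isLinear (κ k)

lemma interior_polytope_nonempty_of_lt {z : Fin n → ℝ} (hz : ∀ k, dotp (η k) z < κ k) :
    (interior (polytope η κ)).Nonempty := by
  have hopen : IsOpen {x | ∀ k, dotp (η k) x < κ k} := by
    simp only [ofPred_forall]
    exact isOpen_iInter_of_finite fun k => isOpen_lt (by fun_prop) continuous_const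
  exact ⟨z, interior_maximal (fun x hx k => (hx k).le) hopen hz⟩

end Polytope

section Boundedness

/-- The conormals positively span the ambient space. The condition is stated dually, as the absence
of recession directions: it is what boundedness of a polytope says about its conormals alone. -/
def PositivelySpans (η : Fin N → Fin n → ℝ) : Prop :=
  ∀ d ≠ 0, ∃ k, 0 < dotp (η k) d

lemma positivelySpans_of_isBounded (hne : (polytope η κ).Nonempty)
    (hb : Bornology.IsBounded (polytope η κ)) : PositivelySpans η := by
  intro d hd
  by_contra! hneg
  obtain ⟨x, hx⟩ := hne
  obtain ⟨R, hR⟩ := hb.exists_norm_le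
  have hray : ∀ t : ℝ, 0 ≤ t → t * ‖d‖ ≤ R + ‖x‖ := by
    intro t ht
    have hmem : x + t • d ∈ polytope η κ := fun k => by
      rw [dotp_add, dotp_smul]
      linarith [hx k, mul_nonpos_of_nonneg_of_nonpos ht (hneg k)]
    calc t * ‖d‖ = ‖(x + t • d) - x‖ := by
          rw [add_sub_cancel_left, norm_smul, Real.norm_of_nonneg ht]
      _ ≤ ‖x + t • d‖ + ‖x‖ := norm_sub_le _ _
      _ ≤ R + ‖x‖ := by gcongr; exact hR _ hmem
  have hd : 0 < ‖d‖ := norm_pos_iff.2 hd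
  have hR0 : 0 ≤ R := (norm_nonneg x).trans (hR x hx)
  have := hray ((R + ‖x‖ + 1) / ‖d‖) (by positivity)
  rw [div_mul_cancel₀ _ hd.ne'] at this
  linarith

lemma PositivelySpans.exists_norm_le (hη : PositivelySpans η) :
    ∃ c : ℝ, ∀ κ, ∀ x ∈ polytope η κ, ‖x‖ ≤ c * ‖κ‖ := by
  let g : (Fin n → ℝ) → ℝ := fun x => ∑ k, max (dotp (η k) x) 0
  have hg_pos : ∀ x ∈ Metric.sphere (0 : Fin n → ℝ) 1, 0 < g x := by
    intro x hx
    obtain ⟨k, hk⟩ := hη x (ne_zero_of_mem_unit_sphere ⟨x, hx⟩)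
    exact Finset.sum_pos' (fun _ _ => le_max_right _ _)
      ⟨k, Finset.mem_univ k, hk.trans_le (le_max_left _ _)⟩
  obtain ⟨a, ha, hga⟩ := (isCompact_sphere (0 : Fin n → ℝ) 1).exists_forall_le'
    (f := g) (by fun_prop) hg_pos
  have hg_smul : ∀ (t : ℝ) x, 0 ≤ t → g (t • x) = t * g x := by
    intro t x ht
    simp only [g, dotp_smul, Finset.mul_sum, mul_max_of_nonneg _ _ ht, mul_zero]
  refine ⟨N / a, fun κ x hx => ?_⟩
  have hg_le : g x ≤ N * ‖κ‖ :=
    calc g x ≤ ∑ _k : Fin N, ‖κ‖ := Finset.sum_le_sum fun k _ =>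
          max_le ((hx k).trans ((le_abs_self _).trans (norm_le_pi_norm κ k))) (norm_nonneg κ)
      _ = N * ‖κ‖ := by simp
  have hle_g : a * ‖x‖ ≤ g x := by
    rcases eq_or_ne x 0 with rfl | hx0
    · simp [g, dotp_zero]
    · have hx0 : 0 < ‖x‖ := norm_pos_iff.2 hx0
      have := hga (‖x‖⁻¹ • x) (by simp [norm_smul, hx0.ne'])
      rwa [hg_smul _ _ (by positivity), le_inv_mul_iff₀ hx0, mul_comm] at this
  rw [div_mul_eq_mul_div, le_div_iff₀ ha]
  linarith

lemma PositivelySpans.isCompact_polytope (hη : PositivelySpans η) (κ : Fin N → ℝ) :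
    IsCompact (polytope η κ) := by
  obtain ⟨c, hc⟩ := hη.exists_norm_le
  exact Metric.isCompact_of_isClosed_isBounded (isClosed_polytope η κ)
    (isBounded_iff_forall_norm_le.2 ⟨_, hc κ⟩)

end Boundedness

section Faces

/-- The indices of the facets through `x`. -/
def active (η : Fin N → Fin n → ℝ) (κ : Fin N → ℝ) (x : Fin n → ℝ) : Finset (Fin N) :=
  {k | dotp (η k) x = κ k}

@[simp]
lemma mem_active {x : Fin n → ℝ} {k : Fin N} : k ∈ active η κ x ↔ dotp (η k) x = κ k := by
  simp [active]

lemma mem_face {S : Finset (Fin N)} (hS : S.Nonempty) {x : Fin n → ℝ} :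
    x ∈ face η κ S ↔ x ∈ polytope η κ ∧ S ⊆ active η κ x := by
  simp only [face, mem_iInter₂, facet, mem_ofPred_eq, Finset.subset_iff, mem_active]
  obtain ⟨k, hk⟩ := hS
  exact ⟨fun h => ⟨(h k hk).1, fun j hj => (h j hj).2⟩, fun h j hj => ⟨h.1, h.2 hj⟩⟩

lemma face_singleton (η : Fin N → Fin n → ℝ) (κ : Fin N → ℝ) (i : Fin N) :
    face η κ {i} = facet η κ i := by
  simp [face]

lemma face_pair (η : Fin N → Fin n → ℝ) (κ : Fin N → ℝ) (i j : Fin N) :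
    face η κ {i, j} = facet η κ i ∩ facet η κ j := by
  simp [face]

lemma sum_conormals_eq_iff {x : Fin n → ℝ} (hx : x ∈ polytope η κ) (S : Finset (Fin N)) :
    dotp (∑ k ∈ S, η k) x = ∑ k ∈ S, κ k ↔ S ⊆ active η κ x := by
  rw [sum_dotp, Finset.sum_eq_sum_iff_of_le fun k _ => hx k]
  simp only [Finset.subset_iff, mem_active]

lemma sum_conormals_le {x : Fin n → ℝ} (hx : x ∈ polytope η κ) (S : Finset (Fin N)) :
    dotp (∑ k ∈ S, η k) x ≤ ∑ k ∈ S, κ k := by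
  rw [sum_dotp]
  exact Finset.sum_le_sum fun k _ => hx k

lemma PositivelySpans.isClosed_setOf_face_nonempty (hη : PositivelySpans η)
    (S : Finset (Fin N)) : IsClosed {κ | (face η κ S).Nonempty} := by
  rcases S.eq_empty_or_nonempty with rfl | hS
  · simp [face]
  refine IsSeqClosed.isClosed fun u κ hu hκ => ?_
  choose x hx using hu
  simp only [mem_face hS] at hx
  obtain ⟨c, hc⟩ := hη.exists_norm_le
  obtain ⟨R, hR⟩ := (Metric.isBounded_range_of_tendsto u hκ).exists_norm_le
  have hbdd : ∀ m, x m ∈ Metric.closedBall (0 : Fin n → ℝ) (|c| * R) := fun m => by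
    rw [mem_closedBall_zero_iff]
    calc ‖x m‖ ≤ c * ‖u m‖ := hc _ _ (hx m).1
      _ ≤ |c| * R := by gcongr; exacts [le_abs_self c, hR _ (mem_range_self m)]
  obtain ⟨y, -, φ, hφ, hy⟩ := tendsto_subseq_of_bounded Metric.isBounded_closedBall hbdd
  have hlim := (hκ.comp hφ.tendsto_atTop).prodMk_nhds hy
  refine ⟨y, (mem_face hS).2 ⟨?_, fun k hk => mem_active.2 ?_⟩⟩
  · exact (isClosed_setOf_mem_polytope η).mem_of_tendsto hlim (.of_forall fun m => (hx (φ m)).1)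
  · have hclosed : IsClosed {q : (Fin N → ℝ) × (Fin n → ℝ) | dotp (η k) q.2 = q.1 k} :=
      isClosed_eq (by fun_prop) (by fun_prop)
    exact hclosed.mem_of_tendsto hlim (.of_forall fun m => mem_active.1 ((hx (φ m)).2 hk))

end Faces

section SimplePolytopes

variable {x : Fin n → ℝ} {S : Finset (Fin N)}

lemma IsSimplePoly.exists_dotp_eq (hs : IsSimplePoly η κ) (hx : x ∈ polytope η κ)
    (c : Fin N → ℝ) : ∃ d, ∀ k ∈ active η κ x, dotp (η k) d = c k := by
  obtain ⟨d, hd⟩ := exists_dotp_eq_of_linearIndependent (hs x hx) fun k => c k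
  exact ⟨d, fun k hk => hd ⟨k, mem_active.1 hk⟩⟩

lemma IsSimplePoly.exists_dual (hs : IsSimplePoly η κ) (hx : x ∈ polytope η κ) :
    ∃ D : Fin N → Fin n → ℝ, ∀ k ∈ active η κ x, ∀ m,
      dotp (η k) (D m) = (Pi.single m 1 : Fin N → ℝ) k := by
  choose D hD using fun m => hs.exists_dotp_eq hx (Pi.single m 1)
  exact ⟨D, fun k hk m => hD m k hk⟩

lemma IsSimplePoly.exists_lt (hs : IsSimplePoly η κ) (hne : (polytope η κ).Nonempty) :
    ∃ z, ∀ k, dotp (η k) z < κ k := by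
  obtain ⟨x, hx⟩ := hne
  obtain ⟨d, hd⟩ := hs.exists_dotp_eq hx fun _ => -1
  have hev : ∀ᶠ t : ℝ in nhdsWithin 0 (Ioi 0), ∀ k, dotp (η k) (x + t • d) < κ k := by
    refine Filter.eventually_all.2 fun k => ?_
    by_cases hk : k ∈ active η κ x
    · filter_upwards [self_mem_nhdsWithin] with t ht
      rw [dotp_add, dotp_smul, hd k hk, mem_active.1 hk]
      linarith [mem_Ioi.1 ht]
    · have hopen : IsOpen {t : ℝ | dotp (η k) (x + t • d) < κ k} :=
        isOpen_lt (by fun_prop) continuous_const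
      refine nhdsWithin_le_nhds (hopen.mem_nhds ?_)
      simpa using (hx k).lt_of_ne (mt mem_active.2 hk)
  obtain ⟨t, ht⟩ := hev.exists
  exact ⟨_, ht⟩

lemma IsSimplePoly.eventually_face_nonempty (hs : IsSimplePoly η κ) (hS : (face η κ S).Nonempty) :
    ∀ᶠ κ' in nhds κ, (face η κ' S).Nonempty := by
  rcases S.eq_empty_or_nonempty with rfl | hne
  · simp [face]
  obtain ⟨x, hx⟩ := hS
  obtain ⟨hx, hSx⟩ := (mem_face hne).1 hx
  obtain ⟨D, hD⟩ := hs.exists_dual hx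
  let y : (Fin N → ℝ) → Fin n → ℝ := fun κ' => x + ∑ m ∈ active η κ x, (κ' m - κ m) • D m
  have hy_active : ∀ κ', ∀ k ∈ active η κ x, dotp (η k) (y κ') = κ' k := fun κ' k hk => by
    simp only [y, dotp_add, dotp_sum, dotp_smul, hD k hk, mem_active.1 hk, Pi.single_apply]
    simp [Finset.sum_ite_eq, mem_active.1 hk]
  have hy_inactive : ∀ᶠ κ' in nhds κ, ∀ k ∉ active η κ x, dotp (η k) (y κ') < κ' k := by
    refine Filter.eventually_all.2 fun k => Filter.eventually_imp_distrib_left.2 fun hk => ?_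
    have hopen : IsOpen {κ' : Fin N → ℝ | dotp (η k) (y κ') < κ' k} :=
      isOpen_lt (by fun_prop) (by fun_prop)
    refine hopen.mem_nhds ?_
    simpa [y] using (hx k).lt_of_ne (mt mem_active.2 hk)
  filter_upwards [hy_inactive] with κ' hκ'
  refine ⟨y κ', (mem_face hne).2 ⟨fun k => ?_, fun k hk => mem_active.2 (hy_active κ' k (hSx hk))⟩⟩
  by_cases hk : k ∈ active η κ x
  exacts [(hy_active κ' k hk).le, (hκ' k hk).le]

lemma Analogous.isSimplePoly (h : Analogous η κ κ') (hs : IsSimplePoly η κ) :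
    IsSimplePoly η κ' := by
  intro x hx
  rcases (active η κ' x).eq_empty_or_nonempty with hempty | hne
  · have : IsEmpty {k // dotp (η k) x = κ' k} :=
      ⟨fun k => by simpa [hempty] using mem_active.2 k.2⟩
    exact linearIndependent_empty_type
  · obtain ⟨y, hy⟩ := (h (active η κ' x)).1 ⟨x, (mem_face hne).2 ⟨hx, subset_rfl⟩⟩
    obtain ⟨hy, hxy⟩ := (mem_face hne).1 hy
    exact (hs y hy).comp (Subtype.map id fun k hk => mem_active.1 (hxy (mem_active.2 hk)))
      (Subtype.map_injective _ injective_id)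

lemma GoodPolytope.positivelySpans (hΔ : GoodPolytope η κ) : PositivelySpans η :=
  positivelySpans_of_isBounded (hΔ.2.2.1.mono interior_subset) hΔ.2.1

lemma GoodPolytope.of_analogous (hΔ : GoodPolytope η κ) (h : Analogous η κ κ') :
    GoodPolytope η κ' := by
  have hfacet : ∀ k, (facet η κ' k).Nonempty := fun k => by
    simpa using (h {k}).2 (by simpa using hΔ.2.2.2 k)
  have hpoly : (polytope η κ').Nonempty := by
    rcases isEmpty_or_nonempty (Fin N) with hN | ⟨⟨k⟩⟩
    · exact ⟨0, hN.elim⟩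
    · exact (hfacet k).mono (sep_subset _ _)
  have hs := h.isSimplePoly hΔ.1
  obtain ⟨z, hz⟩ := hs.exists_lt hpoly
  exact ⟨hs, (hΔ.positivelySpans.isCompact_polytope κ').isBounded,
    interior_polytope_nonempty_of_lt hz, hfacet⟩

lemma GoodPolytope.eventually_analogous (hΔ : GoodPolytope η κ) :
    ∀ᶠ κ' in nhds κ, Analogous η κ κ' := by
  refine Filter.eventually_all.2 fun S => ?_
  by_cases hS : (face η κ S).Nonempty
  · filter_upwards [hΔ.1.eventually_face_nonempty hS] with κ' hκ' using iff_of_true hκ' hS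
  · have hopen := (hΔ.positivelySpans.isClosed_setOf_face_nonempty S).isOpen_compl
    filter_upwards [hopen.mem_nhds hS] with κ' hκ' using iff_of_false hκ' hS

lemma GoodPolytope.chamber_mem_nhds (hΔ : GoodPolytope η κ) : chamber η κ ∈ nhds κ := by
  refine connectedComponentIn_mem_nhds ?_
  filter_upwards [hΔ.eventually_analogous] with κ' hκ' using ⟨hκ'.isSimplePoly hΔ.1, hκ'⟩

lemma analogous_of_mem_chamber (h : κ' ∈ chamber η κ) : Analogous η κ κ' :=
  (connectedComponentIn_subset _ _ h).2

end SimplePolytopes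

section Vertices

variable {v x : Fin n → ℝ}

lemma mem_extremePoints_polytope_iff :
    v ∈ (polytope η κ).extremePoints ℝ ↔
      v ∈ polytope η κ ∧ ∀ d, (∀ k ∈ active η κ v, dotp (η k) d = 0) → d = 0 := by
  rw [mem_extremePoints_iff_left]
  refine and_congr_right fun hv => ⟨fun hext d hd => ?_, fun hact x hx y hy hxy => ?_⟩
  · have hev : ∀ᶠ t : ℝ in nhds 0, v + t • d ∈ polytope η κ := by
      refine Filter.eventually_all.2 fun k => ?_
      by_cases hk : k ∈ active η κ v
      · simp [dotp_add, dotp_smul, hd k hk, mem_active.1 hk]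
      · have hopen : IsOpen {t : ℝ | dotp (η k) (v + t • d) < κ k} :=
          isOpen_lt (by fun_prop) continuous_const
        have hmem := hopen.mem_nhds (x := 0) (by simpa using (hv k).lt_of_ne (mt mem_active.2 hk))
        filter_upwards [hmem] with t ht using ht.le
    have hev_neg := (continuous_neg.tendsto' (0 : ℝ) 0 neg_zero).eventually hev
    obtain ⟨t, ⟨ht, ht_neg⟩, ht0⟩ := ((hev.and hev_neg).filter_mono nhdsWithin_le_nhds |>.and
      (self_mem_nhdsWithin (a := (0 : ℝ)) (s := Ioi 0))).exists
    have hmid : v ∈ openSegment ℝ (v + t • d) (v + -t • d) :=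
      ⟨1 / 2, 1 / 2, by norm_num, by norm_num, by norm_num, by module⟩
    have htd : t • d = 0 := by simpa using hext _ ht _ ht_neg hmid
    exact (smul_eq_zero.1 htd).resolve_left (ne_of_gt ht0)
  · obtain ⟨a, b, ha, hb, hab, rfl⟩ := hxy
    refine sub_eq_zero.1 (hact _ fun k hk => ?_)
    have hmean : a * dotp (η k) x + b * dotp (η k) y = κ k := by
      simpa only [dotp_add, dotp_smul] using mem_active.1 hk
    have hy_le : b * dotp (η k) y ≤ b * κ k := mul_le_mul_of_nonneg_left (hy k) hb.le
    have hx_eq : dotp (η k) x = κ k :=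
      (hx k).antisymm (le_of_mul_le_mul_left (by linear_combination hy_le - hmean + κ k * hab) ha)
    rw [dotp_sub, hx_eq, mem_active.1 hk, sub_self]

lemma eq_of_active_subset (hv : v ∈ (polytope η κ).extremePoints ℝ)
    (hx : active η κ v ⊆ active η κ x) : x = v := by
  refine sub_eq_zero.1 ((mem_extremePoints_polytope_iff.1 hv).2 _ fun k hk => ?_)
  rw [dotp_sub, mem_active.1 hk, mem_active.1 (hx hk), sub_self]

lemma finite_extremePoints_polytope (η : Fin N → Fin n → ℝ) (κ : Fin N → ℝ) :
    ((polytope η κ).extremePoints ℝ).Finite := by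
  refine Finite.of_finite_image (f := active η κ) (toFinite _) fun v _ w hw h => ?_
  exact eq_of_active_subset hw h.ge

lemma PositivelySpans.exists_mem_extremePoints (hη : PositivelySpans η) (hx : x ∈ polytope η κ) :
    ∃ v ∈ (polytope η κ).extremePoints ℝ, active η κ x ⊆ active η κ v := by
  let F := (dotpCLM (∑ k ∈ active η κ x, η k)).toExposed (polytope η κ)
  have hF : IsExposed ℝ (polytope η κ) F := ContinuousLinearMap.toExposed.isExposed
  have hx_eq := (sum_conormals_eq_iff hx (active η κ x)).2 subset_rfl
  have hxF : x ∈ F := ⟨hx, fun y hy => (sum_conormals_le hy _).trans hx_eq.ge⟩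
  obtain ⟨v, hv⟩ := (hF.isCompact (hη.isCompact_polytope κ)).extremePoints_nonempty ⟨x, hxF⟩
  have hvP : v ∈ polytope η κ := hv.1.1
  refine ⟨v, hF.isExtreme.extremePoints_subset_extremePoints hv, ?_⟩
  refine (sum_conormals_eq_iff hvP _).1 ((sum_conormals_le hvP _).antisymm ?_)
  exact hx_eq.ge.trans (hv.1.2 x hx)

end Vertices

section Edges

variable {v x d : Fin n → ℝ} {J S : Finset (Fin N)} {m l : Fin N}

/-- The facets with index in `J` cut out an edge of the polytope, with direction `d`, which starts
on the facet `m` and ends on the facet `l`. -/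
structure IsEdge (η : Fin N → Fin n → ℝ) (κ : Fin N → ℝ) (J : Finset (Fin N)) (m l : Fin N)
    (d : Fin n → ℝ) : Prop where
  dotp_eq_zero : ∀ k ∈ J, dotp (η k) d = 0
  exists_smul_eq : ∀ e, (∀ k ∈ J, dotp (η k) e = 0) → ∃ c : ℝ, c • d = e
  dotp_start_neg : dotp (η m) d < 0
  dotp_end_pos : 0 < dotp (η l) d
  face_start_nonempty : (face η κ (insert m J)).Nonempty
  face_end_nonempty : (face η κ (insert l J)).Nonempty

namespace IsEdge

lemma of_analogous (h : IsEdge η κ J m l d) (hκ : Analogous η κ κ') : IsEdge η κ' J m l d where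
  __ := h
  face_start_nonempty := (hκ _).2 h.face_start_nonempty
  face_end_nonempty := (hκ _).2 h.face_end_nonempty

lemma start_notMem (h : IsEdge η κ J m l d) : m ∉ J :=
  fun hm => h.dotp_start_neg.ne (h.dotp_eq_zero m hm)

lemma end_notMem (h : IsEdge η κ J m l d) : l ∉ J :=
  fun hl => h.dotp_end_pos.ne' (h.dotp_eq_zero l hl)

lemma mem_polytope (h : IsEdge η κ J m l d) (hJ : ∀ k ∈ J, dotp (η k) x = κ k)
    (hm : dotp (η m) x ≤ κ m) (hl : dotp (η l) x ≤ κ l) : x ∈ polytope η κ := by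
  have hline : ∀ y, (∀ k ∈ J, dotp (η k) y = κ k) → ∃ c : ℝ, x + c • d = y := fun y hy => by
    obtain ⟨c, hc⟩ := h.exists_smul_eq (y - x) fun k hk => by
      rw [dotp_sub, hy k hk, hJ k hk, sub_self]
    exact ⟨c, by rw [hc, add_sub_cancel]⟩
  obtain ⟨v, hv⟩ := h.face_start_nonempty
  obtain ⟨hv, hvm⟩ := (mem_face (Finset.insert_nonempty m J)).1 hv
  obtain ⟨w, hw⟩ := h.face_end_nonempty
  obtain ⟨hw, hwl⟩ := (mem_face (Finset.insert_nonempty l J)).1 hw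
  rw [Finset.insert_subset_iff, mem_active] at hvm hwl
  obtain ⟨a, rfl⟩ := hline v fun k hk => mem_active.1 (hvm.2 hk)
  obtain ⟨b, rfl⟩ := hline w fun k hk => mem_active.1 (hwl.2 hk)
  simp only [polytope, mem_ofPred_eq, dotp_add, dotp_smul] at hv hw hvm hwl
  have ha : a ≤ 0 := by
    by_contra! ha
    linarith [mul_neg_of_pos_of_neg ha h.dotp_start_neg, hvm.1]
  have hb : 0 ≤ b := by
    by_contra! hb
    linarith [mul_neg_of_neg_of_pos hb h.dotp_end_pos, hwl.1]
  intro k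
  rcases le_total 0 (dotp (η k) d) with hk | hk
  · linarith [hw k, mul_nonneg hb hk]
  · linarith [hv k, mul_nonneg_of_nonpos_of_nonpos ha hk]

end IsEdge

lemma PositivelySpans.exists_exit (hη : PositivelySpans η) (hx : x ∈ polytope η κ) (hd : d ≠ 0)
    (hact : ∀ k ∈ active η κ x, dotp (η k) d ≤ 0) :
    ∃ t : ℝ, 0 < t ∧ x + t • d ∈ polytope η κ ∧
      ∃ l ∈ active η κ (x + t • d), 0 < dotp (η l) d := by
  obtain ⟨k₀, hk₀⟩ := hη d hd
  obtain ⟨l, hl, hmin⟩ := Finset.exists_min_image {k | 0 < dotp (η k) d}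
    (fun k => (κ k - dotp (η k) x) / dotp (η k) d) ⟨k₀, by simpa using hk₀⟩
  simp only [Finset.mem_filter_univ] at hl hmin
  have hlx : dotp (η l) x < κ l :=
    (hx l).lt_of_ne fun h => (hact l (mem_active.2 h)).not_gt hl
  have ht : 0 < (κ l - dotp (η l) x) / dotp (η l) d := div_pos (sub_pos.2 hlx) hl
  refine ⟨_, ht, fun k => ?_, l, mem_active.2 ?_, hl⟩
  · rw [dotp_add, dotp_smul]
    rcases le_or_gt (dotp (η k) d) 0 with hk | hk
    · linarith [hx k, mul_nonpos_of_nonneg_of_nonpos ht.le hk]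
    · linarith [(le_div_iff₀ hk).1 (hmin k hk)]
  · rw [dotp_add, dotp_smul, div_mul_cancel₀ _ hl.ne', add_sub_cancel]

section DualBasis

variable {D : Fin N → Fin n → ℝ}
  (hD : ∀ k ∈ active η κ v, ∀ m, dotp (η k) (D m) = (Pi.single m 1 : Fin N → ℝ) k)
include hD

lemma sum_dotp_smul_dual (hv : v ∈ (polytope η κ).extremePoints ℝ) (e : Fin n → ℝ) :
    ∑ m ∈ active η κ v, dotp (η m) e • D m = e := by
  refine sub_eq_zero.1 ((mem_extremePoints_polytope_iff.1 hv).2 _ fun k hk => ?_)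
  simp only [dotp_sub, dotp_sum, dotp_smul, hD k hk, Pi.single_apply]
  simp [Finset.sum_ite_eq, mem_active.1 hk]

lemma exists_dual_improving (hv : v ∈ (polytope η κ).extremePoints ℝ) (hx : x ∈ polytope η κ)
    {u : Fin n → ℝ} (hu : dotp u v < dotp u x) :
    ∃ m ∈ active η κ v, m ∉ active η κ x ∧ dotp u (D m) < 0 := by
  have hsum : ∑ m ∈ active η κ v, 0 <
      ∑ m ∈ active η κ v, dotp (η m) (x - v) * dotp u (D m) := by
    rwa [Finset.sum_const_zero, ← Finset.sum_congr rfl fun m _ => dotp_smul u (D m) _, ← dotp_sum,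
      sum_dotp_smul_dual hD hv, dotp_sub, sub_pos]
  obtain ⟨m, hm, hpos⟩ := Finset.exists_lt_of_sum_lt hsum
  have hle : dotp (η m) (x - v) ≤ 0 := by
    rw [dotp_sub, mem_active.1 hm]
    exact sub_nonpos.2 (hx m)
  refine ⟨m, hm, fun hmx => ?_, ?_⟩
  · simp [dotp_sub, mem_active.1 hm, mem_active.1 hmx] at hpos
  · exact neg_of_mul_pos_right hpos hle

lemma exists_isEdge (hη : PositivelySpans η) (hv : v ∈ (polytope η κ).extremePoints ℝ)
    (hm : m ∈ active η κ v) :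
    ∃ t : ℝ, 0 < t ∧ v - t • D m ∈ (polytope η κ).extremePoints ℝ ∧
      ∃ l, insert l ((active η κ v).erase m) ⊆ active η κ (v - t • D m) ∧
        IsEdge η κ ((active η κ v).erase m) m l (-D m) := by
  have hDm : dotp (η m) (D m) = 1 := by simp [hD m hm]
  have hD_erase : ∀ k ∈ (active η κ v).erase m, dotp (η k) (D m) = 0 := fun k hk => by
    rw [hD k (Finset.mem_of_mem_erase hk), Pi.single_eq_of_ne (Finset.ne_of_mem_erase hk)]
  have hD_ne : D m ≠ 0 := by
    rintro h
    simp [h, dotp_zero] at hDm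
  obtain ⟨t, ht, hw, l, hl, hlD⟩ := hη.exists_exit (d := -D m) hv.1 (neg_ne_zero.2 hD_ne)
    fun k hk => by
      rw [dotp_neg, hD k hk, neg_nonpos]
      exact (Pi.single_nonneg (α := fun _ : Fin N => ℝ) (i := m)).2 zero_le_one k
  rw [smul_neg, ← sub_eq_add_neg] at hw hl
  have hsub : insert l ((active η κ v).erase m) ⊆ active η κ (v - t • D m) := by
    refine Finset.insert_subset hl fun k hk => ?_
    rw [mem_active, dotp_sub, dotp_smul, hD_erase k hk, mul_zero, sub_zero,
      mem_active.1 (Finset.mem_of_mem_erase hk)]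
  have hedge : IsEdge η κ ((active η κ v).erase m) m l (-D m) :=
    { dotp_eq_zero := fun k hk => by rw [dotp_neg, hD_erase k hk, neg_zero]
      exists_smul_eq := fun e he => by
        refine ⟨-dotp (η m) e, ?_⟩
        rw [neg_smul_neg, ← Finset.sum_eq_single_of_mem (f := fun k => dotp (η k) e • D k) m hm,
          sum_dotp_smul_dual hD hv]
        intro k hk hkm
        rw [he k (Finset.mem_erase.2 ⟨hkm, hk⟩), zero_smul]
      dotp_start_neg := by simp [dotp_neg, hDm]
      dotp_end_pos := hlD
      face_start_nonempty := ⟨v, (mem_face (Finset.insert_nonempty _ _)).2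
        ⟨hv.1, (Finset.insert_erase hm).le⟩⟩
      face_end_nonempty := ⟨_, (mem_face (Finset.insert_nonempty _ _)).2 ⟨hw, hsub⟩⟩ }
  refine ⟨t, ht, mem_extremePoints_polytope_iff.2 ⟨hw, fun e he => ?_⟩, l, hsub, hedge⟩
  obtain ⟨c, rfl⟩ := hedge.exists_smul_eq e fun k hk => he k (hsub (Finset.mem_insert_of_mem hk))
  have hc := he l hl
  rw [dotp_smul, mul_eq_zero, or_iff_left hlD.ne'] at hc
  rw [hc, zero_smul]

end DualBasis

-- The simplex method: maximizing a functional that exposes the vertex `v₀` walks from any vertex of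
-- the face to `v₀` along edges of the face.
lemma IsSimplePoly.vertex_induction (hs : IsSimplePoly η κ) (hη : PositivelySpans η)
    {p : (Fin n → ℝ) → Prop} {v₀ : Fin n → ℝ} (hv₀ : v₀ ∈ (polytope η κ).extremePoints ℝ)
    (hSv₀ : S ⊆ active η κ v₀) (base : p v₀)
    (step : ∀ J m l d v w, IsEdge η κ J m l d → S ⊆ J → active η κ v = insert m J →
      insert l J ⊆ active η κ w → p w → p v)
    (hv : v ∈ (polytope η κ).extremePoints ℝ) (hSv : S ⊆ active η κ v) : p v := by
  by_contra hpv
  let B := {w ∈ (polytope η κ).extremePoints ℝ | S ⊆ active η κ w ∧ ¬p w}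
  have hB : B.Finite := (finite_extremePoints_polytope η κ).subset (sep_subset _ _)
  obtain ⟨v, ⟨hv, hSv, hpv⟩, hmax⟩ :=
    B.exists_max_image (dotp (∑ k ∈ active η κ v₀, η k)) hB ⟨v, hv, hSv, hpv⟩
  have hlt : dotp (∑ k ∈ active η κ v₀, η k) v < dotp (∑ k ∈ active η κ v₀, η k) v₀ := by
    rw [(sum_conormals_eq_iff hv₀.1 _).2 subset_rfl]
    refine (sum_conormals_le hv.1 _).lt_of_ne fun h => hpv ?_
    rwa [eq_of_active_subset hv₀ ((sum_conormals_eq_iff hv.1 _).1 h)]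
  obtain ⟨D, hD⟩ := hs.exists_dual hv.1
  obtain ⟨m, hm, hmv₀, hDm⟩ := exists_dual_improving hD hv hv₀.1 hlt
  obtain ⟨t, ht, hw, l, hJw, hedge⟩ := exists_isEdge hD hη hv hm
  have hSJ : S ⊆ (active η κ v).erase m := Finset.subset_erase.2 ⟨hSv, fun h => hmv₀ (hSv₀ h)⟩
  refine hpv (step _ _ _ _ _ _ hedge hSJ (Finset.insert_erase hm).symm hJw ?_)
  by_contra hpw
  have := hmax _ ⟨hw, hSJ.trans ((Finset.subset_insert _ _).trans hJw), hpw⟩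
  rw [dotp_sub, dotp_smul] at this
  linarith [mul_neg_of_pos_of_neg ht hDm]

lemma GoodPolytope.flatFacet_of_isEdge (hΔ : GoodPolytope η κ) {i : Fin N}
    (h : ∀ J m l d ξ, IsEdge η κ J m l d → i ∈ J → dotp (η i) ξ = 1 →
      (∀ k ∈ insert l J, k ≠ i → dotp (η k) ξ = 0) → dotp (η m) ξ = 0) :
    FlatFacet η κ i := by
  have hη := hΔ.positivelySpans
  have exists_vertex : ∀ x ∈ facet η κ i,
      ∃ v ∈ (polytope η κ).extremePoints ℝ, i ∈ active η κ v ∧ active η κ x ⊆ active η κ v := by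
    intro x hx
    obtain ⟨v, hv, hxv⟩ := hη.exists_mem_extremePoints hx.1
    exact ⟨v, hv, hxv (mem_active.2 hx.2), hxv⟩
  obtain ⟨x₀, hx₀⟩ := hΔ.2.2.2 i
  obtain ⟨v₀, hv₀, hiv₀, -⟩ := exists_vertex x₀ hx₀
  obtain ⟨D, hD⟩ := hΔ.1.exists_dual hv₀.1
  have hDi : dotp (η i) (D i) = 1 := by simp [hD i hiv₀]
  refine ⟨D i, fun h0 => ?_, fun j hji hij => ?_⟩
  · simp [h0, dotp_zero] at hDi
  obtain ⟨x, hxi, hxj⟩ := hij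
  obtain ⟨v, hv, hiv, hxv⟩ := exists_vertex x hxi
  refine hΔ.1.vertex_induction hη (S := {i}) (p := fun v => ∀ k ∈ active η κ v, k ≠ i →
    dotp (η k) (D i) = 0) hv₀ (by simpa using hiv₀) ?base ?step hv (by simpa using hiv) j
    (hxv (mem_active.2 hxj.2)) hji
  case base => exact fun k hk hki => by rw [hD k hk, Pi.single_eq_of_ne hki]
  case step =>
    intro J m l d v w hedge hiJ hv hw hpw k hk hki
    have hend : ∀ k ∈ insert l J, k ≠ i → dotp (η k) (D i) = 0 := fun k hk => hpw k (hw hk)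
    rcases Finset.mem_insert.1 (hv ▸ hk) with rfl | hkJ
    · exact h J k l d (D i) hedge (Finset.singleton_subset_iff.1 hiJ) hDi hend
    · exact hend k (Finset.mem_insert_of_mem hkJ) hki

end Edges

section Slabs

variable {s : ℝ} {S : Finset (Fin N)} {k : Fin N}

lemma mem_closedBall_of_mem_Icc (hs : 0 ≤ s) (hS : ∀ k ∈ S, κ' k ∈ Icc (κ k - s) (κ k))
    (hSc : ∀ k ∉ S, κ' k = κ k) : κ' ∈ Metric.closedBall κ s := by
  refine (dist_pi_le_iff hs).2 fun k => ?_
  by_cases hk : k ∈ S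
  · rw [Real.dist_eq, abs_le]
    constructor <;> linarith [(hS k hk).1, (hS k hk).2]
  · rw [hSc k hk, dist_self]
    exact hs

/-- The part of a polytope within `s` of the facet hyperplanes with index in `S`, where the distance
is measured by the conormals. -/
def slab (η : Fin N → Fin n → ℝ) (s : ℝ) (S : Finset (Fin N)) (κ : Fin N → ℝ) :
    Set (Fin n → ℝ) :=
  {x ∈ polytope η κ | ∀ k ∈ S, κ k - s < dotp (η k) x}

lemma slab_subset_polytope : slab η s S κ ⊆ polytope η κ := sep_subset _ _

lemma slab_empty (η : Fin N → Fin n → ℝ) (s : ℝ) (κ : Fin N → ℝ) :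
    slab η s ∅ κ = polytope η κ := by
  simp [slab]

lemma face_subset_slab (hS : S.Nonempty) (hs : 0 < s) : face η κ S ⊆ slab η s S κ := by
  intro x hx
  obtain ⟨hx, hSx⟩ := (mem_face hS).1 hx
  refine ⟨hx, fun k hk => ?_⟩
  rw [mem_active.1 (hSx hk)]
  exact sub_lt_self _ hs

lemma isOpen_setOf_lt_dotp (η : Fin N → Fin n → ℝ) (S : Finset (Fin N)) (c : Fin N → ℝ) :
    IsOpen {x | ∀ k ∈ S, c k < dotp (η k) x} := by
  simp only [ofPred_forall]
  exact isOpen_biInter_finset fun k _ => isOpen_lt continuous_const (by fun_prop)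

lemma measurableSet_slab (η : Fin N → Fin n → ℝ) (s : ℝ) (S : Finset (Fin N)) (κ : Fin N → ℝ) :
    MeasurableSet (slab η s S κ) :=
  (isClosed_polytope η κ).measurableSet.inter (isOpen_setOf_lt_dotp η S _).measurableSet

lemma slab_sub_single_subset (hs : 0 ≤ s) (hk : k ∉ S) :
    slab η s S (κ - Pi.single k s) ⊆ slab η s S κ := by
  rintro x ⟨hx, hxS⟩
  refine ⟨fun p => (hx p).trans ?_, fun p hp => ?_⟩
  · exact sub_le_self _ ((Pi.single_nonneg (α := fun _ : Fin N => ℝ)).2 hs p)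
  · simpa [ne_of_mem_of_not_mem hp hk] using hxS p hp

lemma slab_insert (hk : k ∉ S) :
    slab η s (insert k S) κ = slab η s S κ \ slab η s S (κ - Pi.single k s) := by
  ext x
  constructor
  · rintro ⟨hx, hxS⟩
    refine ⟨⟨hx, fun p hp => hxS p (Finset.mem_insert_of_mem hp)⟩, fun h => ?_⟩
    have := h.1 k
    rw [Pi.sub_apply, Pi.single_eq_same] at this
    exact this.not_gt (hxS k (Finset.mem_insert_self k S))
  · rintro ⟨⟨hx, hxS⟩, hnot⟩
    refine ⟨hx, (Finset.forall_mem_insert _ _ _).2 ⟨?_, hxS⟩⟩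
    by_contra! hxk
    refine hnot ⟨fun p => ?_, fun p hp => ?_⟩
    · rcases eq_or_ne p k with rfl | hpk
      · simpa using hxk
      · simpa [hpk] using hx p
    · simpa [ne_of_mem_of_not_mem hp hk] using hxS p hp

lemma slab_eq_empty (hs : 0 ≤ s) (hS : S.Nonempty)
    (h : ∀ κ' ∈ Metric.closedBall κ s, face η κ' S = ∅) : slab η s S κ = ∅ := by
  refine eq_empty_of_forall_notMem fun x hx => ?_
  let κ' := S.piecewise (fun k => dotp (η k) x) κ
  have hκ'S : ∀ k ∈ S, κ' k = dotp (η k) x := fun k hk => S.piecewise_eq_of_mem _ _ hk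
  have hκ'Sc : ∀ k ∉ S, κ' k = κ k := fun k hk => S.piecewise_eq_of_notMem _ _ hk
  have hxκ' : x ∈ face η κ' S := by
    refine (mem_face hS).2 ⟨fun k => ?_, fun k hk => mem_active.2 (hκ'S k hk).symm⟩
    by_cases hk : k ∈ S
    exacts [(hκ'S k hk).ge, (hx.1 k).trans_eq (hκ'Sc k hk).symm]
  refine (h κ' (mem_closedBall_of_mem_Icc hs (fun k hk => ?_) hκ'Sc)).subset hxκ'
  rw [hκ'S k hk]
  exact ⟨(hx.2 k hk).le, hx.1 k⟩

end Slabs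

section Volume

lemma measure_inter_pos_of_convex {E : Type*} [AddCommGroup E] [Module ℝ E] [TopologicalSpace E]
    [IsTopologicalAddGroup E] [ContinuousSMul ℝ E] [MeasurableSpace E] (μ : Measure E)
    [μ.IsOpenPosMeasure] {s o : Set E} (hs : Convex ℝ s) (hint : (interior s).Nonempty)
    (ho : IsOpen o) (hne : (s ∩ o).Nonempty) : 0 < μ (s ∩ o) := by
  obtain ⟨x, hxs, hxo⟩ := hne
  have hx : x ∈ closure (interior s) := by
    rw [hs.closure_interior_eq_closure_of_nonempty_interior hint]
    exact subset_closure hxs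
  have hne : (interior s ∩ o).Nonempty := by
    rw [inter_comm]
    exact mem_closure_iff.1 hx o ho hxo
  calc 0 < μ (interior s ∩ o) := (isOpen_interior.inter ho).measure_pos μ hne
    _ ≤ μ (s ∩ o) := measure_mono (inter_subset_inter_left o interior_subset)

variable {s : ℝ} {S : Finset (Fin N)} {i j k : Fin N}

lemma volume_slab_inter_pos (hint : (interior (polytope η κ)).Nonempty) {o : Set (Fin n → ℝ)}
    (ho : IsOpen o) (hne : (slab η s S κ ∩ o).Nonempty) : 0 < volume (slab η s S κ ∩ o) := by
  have hslab : slab η s S κ ∩ o =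
      polytope η κ ∩ ({x | ∀ k ∈ S, κ k - s < dotp (η k) x} ∩ o) := inter_assoc _ _ _
  rw [hslab] at hne ⊢
  exact measure_inter_pos_of_convex volume (convex_polytope η κ) hint
    ((isOpen_setOf_lt_dotp η S _).inter ho) hne

namespace PositivelySpans

lemma volume_slab_ne_top (hη : PositivelySpans η) (s : ℝ) (S : Finset (Fin N)) (κ : Fin N → ℝ) :
    volume (slab η s S κ) ≠ ⊤ :=
  measure_ne_top_of_subset slab_subset_polytope (hη.isCompact_polytope κ).measure_ne_top

lemma volume_slab_pos (hη : PositivelySpans η) (hint : (interior (polytope η κ)).Nonempty)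
    (hne : (slab η s S κ).Nonempty) : 0 < volume.real (slab η s S κ) := by
  refine ENNReal.toReal_pos (ne_of_gt ?_) (hη.volume_slab_ne_top s S κ)
  simpa using volume_slab_inter_pos hint isOpen_univ (by simpa using hne)

lemma volume_slab_insert (hη : PositivelySpans η) (hs : 0 ≤ s) (hk : k ∉ S) (κ : Fin N → ℝ) :
    volume.real (slab η s (insert k S) κ) =
      volume.real (slab η s S κ) - volume.real (slab η s S (κ - Pi.single k s)) := by
  rw [slab_insert hk, measureReal_sdiff (slab_sub_single_subset hs hk) (measurableSet_slab _ _ _ _)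
    (hη.volume_slab_ne_top s S κ)]

lemma setIntegral_slab_insert (hη : PositivelySpans η) (hs : 0 ≤ s) (hk : k ∉ S) (κ : Fin N → ℝ)
    {f : (Fin n → ℝ) → ℝ} (hf : Continuous f) :
    ∫ x in slab η s (insert k S) κ, f x =
      (∫ x in slab η s S κ, f x) - ∫ x in slab η s S (κ - Pi.single k s), f x := by
  have hint : IntegrableOn f (slab η s S κ) :=
    (hf.continuousOn.integrableOn_compact (hη.isCompact_polytope κ)).mono_set slab_subset_polytope
  rw [slab_insert hk,
    setIntegral_sdiff (measurableSet_slab _ _ _ _) hint (slab_sub_single_subset hs hk)]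

lemma setIntegral_dotp (hη : PositivelySpans η) (κ : Fin N → ℝ) (H : Fin n → ℝ) :
    ∫ x in polytope η κ, dotp H x = volume.real (polytope η κ) * dotp H (centroid η κ) := by
  have hcompact := hη.isCompact_polytope κ
  have hint : IntegrableOn (fun x => x) (polytope η κ) :=
    continuousOn_id.integrableOn_compact hcompact
  rw [centroid, ← dotp_smul, measure_smul_setAverage _ hcompact.measure_ne_top]
  exact (dotpCLM H).integral_comp_comm hint

lemma volume_slab_insert_add_single (hη : PositivelySpans η) (hs : 0 ≤ s) (hi : i ∉ S)
    (h : ∀ κ', (∀ k ∈ S, κ' k ∈ Icc (κ k - s) (κ k)) → (∀ k ∉ S, κ' k = κ k) →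
      volume.real (slab η s {i} (κ' + Pi.single i s)) = volume.real (slab η s {i} κ')) :
    volume.real (slab η s (insert i S) (κ + Pi.single i s)) =
      volume.real (slab η s (insert i S) κ) := by
  induction S using Finset.induction_on generalizing κ with
  | empty => exact h κ (by simp) fun _ _ => rfl
  | insert k S hk ih =>
    obtain ⟨hik, hiS⟩ : i ≠ k ∧ i ∉ S := by simpa [not_or] using hi
    have hkiS : k ∉ insert i S := by simp [hik.symm, hk]
    have h_at : ∀ κ₁, κ₁ k ∈ Icc (κ k - s) (κ k) → (∀ p ≠ k, κ₁ p = κ p) →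
        volume.real (slab η s (insert i S) (κ₁ + Pi.single i s)) =
          volume.real (slab η s (insert i S) κ₁) := by
      intro κ₁ hκ₁k hκ₁
      refine ih hiS fun κ' hκ'S hκ'Sc => h κ' ?_ fun p hp => ?_
      · refine (Finset.forall_mem_insert _ _ _).2 ⟨hκ'Sc k hk ▸ hκ₁k, fun p hp => ?_⟩
        exact hκ₁ p (ne_of_mem_of_not_mem hp hk) ▸ hκ'S p hp
      · rw [Finset.mem_insert, not_or] at hp
        rw [hκ'Sc p hp.2, hκ₁ p hp.1]
    rw [Finset.insert_comm, hη.volume_slab_insert hs hkiS, hη.volume_slab_insert hs hkiS,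
      add_sub_right_comm, h_at κ (by simp [hs]) fun _ _ => rfl,
      h_at (κ - (Pi.single k s : Fin N → ℝ)) (by simp [hs]) fun p hp => by simp [hp]]

end PositivelySpans

end Volume

section EdgeVolumes

variable {J : Finset (Fin N)} {m l i : Fin N} {d ξ : Fin n → ℝ} {s : ℝ}

lemma IsEdge.mem_slab_of_translate (hs : 0 ≤ s)
    (hedge : ∀ κ' ∈ Metric.closedBall κ s, IsEdge η κ' J m l d) {ζ x : Fin n → ℝ}
    (hJ : ∀ k ∈ J, κ k = κ' k + dotp (η k) ζ) (hJc : ∀ k ∉ J, κ k = κ' k)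
    (hm : dotp (η m) ζ ≤ 0) (hl : dotp (η l) ζ ≤ 0) (hx : x - ζ ∈ slab η s J κ') :
    x ∈ slab η s J κ := by
  obtain ⟨hle, hlt⟩ := hx
  simp only [polytope, mem_ofPred_eq, dotp_sub, sub_le_iff_le_add, lt_sub_iff_add_lt] at hle hlt
  have hlt : ∀ k ∈ J, κ k - s < dotp (η k) x := fun k hk => by linarith [hJ k hk, hlt k hk]
  have hle_J : ∀ k ∈ J, dotp (η k) x ≤ κ k := fun k hk => by linarith [hJ k hk, hle k]
  let κx := J.piecewise (fun k => dotp (η k) x) κ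
  have hκxJ : ∀ k ∈ J, κx k = dotp (η k) x := fun k hk => J.piecewise_eq_of_mem _ _ hk
  have hκxJc : ∀ k ∉ J, κx k = κ k := fun k hk => J.piecewise_eq_of_notMem _ _ hk
  have hedge_x : IsEdge η κx J m l d := by
    refine hedge κx (mem_closedBall_of_mem_Icc hs (fun k hk => ?_) hκxJc)
    rw [hκxJ k hk]
    exact ⟨(hlt k hk).le, hle_J k hk⟩
  have hxP : x ∈ polytope η κx := by
    refine hedge_x.mem_polytope (fun k hk => (hκxJ k hk).symm) ?_ ?_
    · linarith [hle m, hκxJc m hedge_x.start_notMem, hJc m hedge_x.start_notMem]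
    · linarith [hle l, hκxJc l hedge_x.end_notMem, hJc l hedge_x.end_notMem]
  refine ⟨fun k => ?_, hlt⟩
  by_cases hk : k ∈ J
  exacts [hle_J k hk, (hxP k).trans_eq (hκxJc k hk)]

lemma IsEdge.volume_slab_lt (hη : PositivelySpans η) (hint : (interior (polytope η κ)).Nonempty)
    (hs : 0 < s) (hedge : ∀ κ' ∈ Metric.closedBall κ s, IsEdge η κ' J m l d) {ζ : Fin n → ℝ}
    (hJ : ∀ k ∈ J, κ k = κ' k + dotp (η k) ζ) (hJc : ∀ k ∉ J, κ k = κ' k)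
    (hm : dotp (η m) ζ < 0) (hl : dotp (η l) ζ ≤ 0) :
    volume.real (slab η s J κ') < volume.real (slab η s J κ) := by
  have hedge_κ := hedge κ (Metric.mem_closedBall_self hs.le)
  let A := (fun x => x + -ζ) ⁻¹' slab η s J κ'
  let U := {x : Fin n → ℝ | κ m + dotp (η m) ζ < dotp (η m) x}
  have hA_meas : MeasurableSet A :=
    measurableSet_preimage (by fun_prop) (measurableSet_slab _ _ _ _)
  have hA_sub : A ⊆ slab η s J κ := fun x hx =>
    mem_slab_of_translate hs.le hedge hJ hJc hm.le hl (by simpa [A, sub_eq_add_neg] using hx)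
  have hA_vol : volume.real A = volume.real (slab η s J κ') := by
    rw [measureReal_def, measure_preimage_add_right, measureReal_def]
  have hAU : slab η s J κ ∩ U ⊆ slab η s J κ \ A := by
    rintro x ⟨hx, hxU⟩
    refine ⟨hx, fun hxA => ?_⟩
    have hxm := hxA.1 m
    rw [dotp_add, dotp_neg, ← hJc m hedge_κ.start_notMem] at hxm
    linarith [mem_ofPred_eq ▸ hxU]
  have hU_ne : (slab η s J κ ∩ U).Nonempty := by
    obtain ⟨v, hv⟩ := hedge_κ.face_start_nonempty
    have hv_slab := face_subset_slab (Finset.insert_nonempty m J) hs hv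
    obtain ⟨-, hv_act⟩ := (mem_face (Finset.insert_nonempty m J)).1 hv
    have hvm : dotp (η m) v = κ m := mem_active.1 (hv_act (Finset.mem_insert_self m J))
    refine ⟨v, ⟨hv_slab.1, fun k hk => hv_slab.2 k (Finset.mem_insert_of_mem hk)⟩, ?_⟩
    change κ m + dotp (η m) ζ < dotp (η m) v
    linarith
  have hU_pos := volume_slab_inter_pos hint (isOpen_lt continuous_const (by fun_prop)) hU_ne
  rw [← hA_vol, ← sub_pos, ← measureReal_sdiff hA_sub hA_meas (hη.volume_slab_ne_top _ _ _)]
  exact ENNReal.toReal_pos (hU_pos.trans_le (measure_mono hAU)).ne'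
    (measure_ne_top_of_subset sdiff_subset (hη.volume_slab_ne_top _ _ _))

lemma IsEdge.dotp_start_eq_zero (hη : PositivelySpans η) (hs : 0 < s)
    (hint : ∀ κ' ∈ Metric.closedBall κ s, (interior (polytope η κ')).Nonempty)
    (hedge : ∀ κ' ∈ Metric.closedBall κ (2 * s), IsEdge η κ' J m l d)
    (hvol : volume.real (slab η s J (κ + Pi.single i s)) = volume.real (slab η s J κ))
    (hiJ : i ∈ J) (hξi : dotp (η i) ξ = 1) (hξ : ∀ k ∈ insert l J, k ≠ i → dotp (η k) ξ = 0) :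
    dotp (η m) ξ = 0 := by
  set κ₁ : Fin N → ℝ := κ + Pi.single i s with hκ₁
  have hκ₁_mem : κ₁ ∈ Metric.closedBall κ s := by
    simp [hκ₁, Pi.norm_single, abs_of_pos hs]
  have hball : Metric.closedBall κ₁ s ⊆ Metric.closedBall κ (2 * s) :=
    Metric.closedBall_subset_closedBall' (by linarith [Metric.mem_closedBall.1 hκ₁_mem])
  have hball₀ : Metric.closedBall κ s ⊆ Metric.closedBall κ (2 * s) :=
    Metric.closedBall_subset_closedBall (by linarith)
  have hlJ : l ∉ J := (hedge κ (Metric.mem_closedBall_self (by linarith))).end_notMem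
  have hξl : dotp (η l) ξ = 0 :=
    hξ l (Finset.mem_insert_self l J) (ne_of_mem_of_not_mem hiJ hlJ).symm
  have hJ : ∀ k ∈ J, κ₁ k = κ k + s * dotp (η k) ξ := by
    intro k hk
    rcases eq_or_ne k i with rfl | hki
    · simp [hκ₁, hξi]
    · simp [hκ₁, hki, hξ k (Finset.mem_insert_of_mem hk) hki]
  have hJc : ∀ k ∉ J, κ₁ k = κ k := fun k hk => by
    simp [hκ₁, (ne_of_mem_of_not_mem hiJ hk).symm]
  rcases lt_trichotomy (dotp (η m) ξ) 0 with hneg | h0 | hpos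
  · have := volume_slab_lt hη (hint κ₁ hκ₁_mem) hs (fun κ' h => hedge κ' (hball h)) (ζ := s • ξ)
      (fun k hk => by rw [dotp_smul, hJ k hk]) hJc
      (by rw [dotp_smul]; exact mul_neg_of_pos_of_neg hs hneg) (by simp [dotp_smul, hξl])
    exact absurd hvol this.ne'
  · exact h0
  · have := volume_slab_lt hη (hint κ (Metric.mem_closedBall_self hs.le)) hs
      (fun κ' h => hedge κ' (hball₀ h)) (ζ := -(s • ξ))
      (fun k hk => by rw [dotp_neg, dotp_smul, hJ k hk, add_neg_cancel_right])
      (fun k hk => (hJc k hk).symm)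
      (by rw [dotp_neg, dotp_smul]; exact neg_neg_of_pos (mul_pos hs hpos))
      (by simp [dotp_neg, dotp_smul, hξl])
    exact absurd hvol this.ne

end EdgeVolumes

section MassLinear

variable {H : Fin n → ℝ} {γ : Fin N → ℝ} {C s : ℝ} {i j : Fin N}

lemma PositivelySpans.setIntegral_mixed_difference (hη : PositivelySpans η) (hij : i ≠ j)
    (hs : 0 ≤ s) (hempty : slab η s {i, j} κ = ∅) {f : (Fin n → ℝ) → ℝ} (hf : Continuous f) :
    (∫ x in polytope η κ, f x) - ∫ x in polytope η (κ - Pi.single j s), f x =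
      (∫ x in polytope η (κ - Pi.single i s), f x) -
        ∫ x in polytope η (κ - Pi.single i s - Pi.single j s), f x := by
  have hslab_j : ∀ κ, ∫ x in slab η s {j} κ, f x =
      (∫ x in polytope η κ, f x) - ∫ x in polytope η (κ - Pi.single j s), f x := fun κ => by
    simpa only [slab_empty, insert_empty_eq] using
      hη.setIntegral_slab_insert hs (Finset.notMem_empty j) κ hf
  have hslab_ij := hη.setIntegral_slab_insert hs (Finset.notMem_singleton.2 hij) κ hf
  rwa [hempty, setIntegral_empty, eq_comm, sub_eq_zero, hslab_j, hslab_j] at hslab_ij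

lemma MassLinear.dotp_centroid_sub_single (hml : MassLinear η κ H γ C) (h : κ' ∈ chamber η κ)
    (hi : κ' - Pi.single i s ∈ chamber η κ) :
    dotp H (centroid η (κ' - Pi.single i s)) = dotp H (centroid η κ') - γ i * s := by
  rw [hml _ h, hml _ hi]
  simp only [Pi.sub_apply, mul_sub, Finset.sum_sub_distrib, Pi.single_apply, mul_ite, mul_zero,
    Finset.sum_ite_eq', Finset.mem_univ, if_true]
  ring

lemma MassLinear.volume_slab_relation (hml : MassLinear η κ H γ C) (hη : PositivelySpans η)
    (hij : i ≠ j) (hs : 0 < s) (hball : Metric.closedBall κ' s ⊆ chamber η κ)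
    (hempty : slab η s {i, j} κ' = ∅) :
    γ i * volume.real (slab η s {j} κ') + γ j * volume.real (slab η s {i} κ') = 0 := by
  have hslab : ∀ k, volume.real (slab η s {k} κ') =
      volume.real (polytope η κ') - volume.real (polytope η (κ' - Pi.single k s)) := fun k => by
    simpa only [slab_empty, insert_empty_eq] using
      hη.volume_slab_insert hs.le (Finset.notMem_empty k) κ'
  have hmem : ∀ κ'' : Fin N → ℝ, (∀ k ∈ ({i, j} : Finset (Fin N)), κ'' k ∈ Icc (κ' k - s) (κ' k)) →
      (∀ k ∉ ({i, j} : Finset (Fin N)), κ'' k = κ' k) → κ'' ∈ chamber η κ :=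
    fun κ'' h h' => hball (mem_closedBall_of_mem_Icc hs.le h h')
  have h₀ : κ' ∈ chamber η κ := hball (Metric.mem_closedBall_self hs.le)
  have hi : κ' - Pi.single i s ∈ chamber η κ := by
    apply hmem <;> simp +contextual [hij.symm, hs.le]
  have hj : κ' - Pi.single j s ∈ chamber η κ := by
    apply hmem <;> simp +contextual [hij, hs.le]
  have hij' : κ' - Pi.single i s - Pi.single j s ∈ chamber η κ := by
    apply hmem <;> simp +contextual [hij, hij.symm, hs.le]
  have hvol := hη.setIntegral_mixed_difference hij hs.le hempty (f := fun _ => 1) (by fun_prop)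
  have hmoment := hη.setIntegral_mixed_difference hij hs.le hempty (continuous_dotp H)
  simp only [setIntegral_const, smul_eq_mul, mul_one] at hvol
  simp only [hη.setIntegral_dotp, hml.dotp_centroid_sub_single hi hij',
    hml.dotp_centroid_sub_single h₀ hi, hml.dotp_centroid_sub_single h₀ hj] at hmoment
  rw [hslab, hslab]
  refine mul_left_cancel₀ hs.ne' ?_
  linear_combination hmoment + (γ i * s + γ j * s - dotp H (centroid η κ')) * hvol

lemma MassLinear.volume_slab_add_single (hml : MassLinear η κ H γ C) (hη : PositivelySpans η)
    (hij : i ≠ j) (hγ : γ i ≠ 0) (hs : 0 < s)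
    (hball : Metric.closedBall κ' (2 * s) ⊆ chamber η κ)
    (hint : (interior (polytope η κ')).Nonempty) (hj : (facet η κ' j).Nonempty)
    (hempty : ∀ κ'' ∈ chamber η κ, facet η κ'' i ∩ facet η κ'' j = ∅) :
    volume.real (slab η s {i} (κ' + Pi.single i s)) = volume.real (slab η s {i} κ') := by
  set κ₁ : Fin N → ℝ := κ' + Pi.single i s with hκ₁
  have hball₀ : Metric.closedBall κ' s ⊆ chamber η κ :=
    (Metric.closedBall_subset_closedBall (by linarith)).trans hball
  have hball₁ : Metric.closedBall κ₁ s ⊆ chamber η κ :=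
    (Metric.closedBall_subset_closedBall'
      (by simp [hκ₁, Pi.norm_single, abs_of_pos hs, two_mul])).trans hball
  have slab_ij : ∀ κ'', Metric.closedBall κ'' s ⊆ chamber η κ → slab η s {i, j} κ'' = ∅ :=
    fun κ'' h => slab_eq_empty hs.le (Finset.insert_nonempty _ _) fun κ₂ hκ₂ => by
      rw [face_pair, hempty κ₂ (h hκ₂)]
  have hrel₀ := hml.volume_slab_relation hη hij hs hball₀ (slab_ij κ' hball₀)
  have hrel₁ := hml.volume_slab_relation hη hij hs hball₁ (slab_ij κ₁ hball₁)
  have hslab_j : volume.real (slab η s {j} κ₁) = volume.real (slab η s {j} κ') := by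
    have := hη.volume_slab_insert hs.le (Finset.notMem_singleton.2 hij) κ₁
    rwa [slab_ij κ₁ hball₁, measureReal_empty, eq_comm, sub_eq_zero, hκ₁, add_sub_cancel_right]
      at this
  have hslab_j_pos : 0 < volume.real (slab η s {j} κ') :=
    hη.volume_slab_pos hint ((face_singleton η κ' j ▸ hj).mono
      (face_subset_slab (Finset.singleton_nonempty j) hs))
  have hγj : γ j ≠ 0 := by
    intro h
    rw [h, zero_mul, add_zero] at hrel₀
    exact mul_ne_zero hγ hslab_j_pos.ne' hrel₀
  refine mul_left_cancel₀ hγj ?_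
  linear_combination hrel₁ - hrel₀ - γ i * hslab_j

lemma MassLinear.volume_slab_insert_add_single {S : Finset (Fin N)} (hml : MassLinear η κ H γ C)
    (hΔ : GoodPolytope η κ) (hij : i ≠ j) (hγ : γ i ≠ 0)
    (hdisj : facet η κ i ∩ facet η κ j = ∅) (hs : 0 < s)
    (hball : Metric.closedBall κ (3 * s) ⊆ chamber η κ) (hi : i ∉ S) :
    volume.real (slab η s (insert i S) (κ + Pi.single i s)) =
      volume.real (slab η s (insert i S) κ) := by
  have hη := hΔ.positivelySpans
  refine hη.volume_slab_insert_add_single hs.le hi fun κ' hκ'S hκ'Sc => ?_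
  have hκ' := mem_closedBall_of_mem_Icc hs.le hκ'S hκ'Sc
  have hball' : Metric.closedBall κ' (2 * s) ⊆ chamber η κ :=
    (Metric.closedBall_subset_closedBall' (by linarith [Metric.mem_closedBall.1 hκ'])).trans hball
  have hΔ' : GoodPolytope η κ' := hΔ.of_analogous
    (analogous_of_mem_chamber (hball' (Metric.mem_closedBall_self (by positivity))))
  refine hml.volume_slab_add_single hη hij hγ hs hball' hΔ'.2.2.1 (hΔ'.2.2.2 j) fun κ'' hκ'' => ?_
  rw [← face_pair, ← not_nonempty_iff_eq_empty]
  refine mt (analogous_of_mem_chamber hκ'' {i, j}).1 ?_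
  change ¬(face η κ {i, j}).Nonempty
  rwa [face_pair, not_nonempty_iff_eq_empty]

lemma MassLinear.flatFacet (hml : MassLinear η κ H γ C) (hΔ : GoodPolytope η κ)
    (hij : i ≠ j) (hγ : γ i ≠ 0) (hdisj : facet η κ i ∩ facet η κ j = ∅) : FlatFacet η κ i := by
  obtain ⟨ρ, hρ, hball⟩ := Metric.nhds_basis_closedBall.mem_iff.1 hΔ.chamber_mem_nhds
  obtain ⟨s, hs, rfl⟩ : ∃ s, 0 < s ∧ 3 * s = ρ := ⟨ρ / 3, by positivity, by ring⟩
  have analogous : ∀ κ' ∈ Metric.closedBall κ (2 * s), Analogous η κ κ' := fun κ' h =>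
    analogous_of_mem_chamber (hball (Metric.closedBall_subset_closedBall (by linarith) h))
  refine hΔ.flatFacet_of_isEdge fun J m l d ξ hedge hiJ hξi hξ => ?_
  have hvol := hml.volume_slab_insert_add_single hΔ hij hγ hdisj hs hball (Finset.notMem_erase i J)
  rw [Finset.insert_erase hiJ] at hvol
  refine IsEdge.dotp_start_eq_zero hΔ.positivelySpans hs (fun κ' h => ?_)
    (fun κ' h => hedge.of_analogous (analogous κ' h)) hvol hiJ hξi hξ
  exact (hΔ.of_analogous (analogous κ'
    (Metric.closedBall_subset_closedBall (by linarith) h))).2.2.1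

end MassLinear

end MassLinearPaper

/-- For a mass linear function, every asymmetric facet is pervasive or flat. -/
theorem stmt9 {n N : ℕ} (η : Fin N → Fin n → ℝ) (κ : Fin N → ℝ) (H : Fin n → ℝ)
    (γ : Fin N → ℝ) (C : ℝ) (hΔ : GoodPolytope η κ)
    (hml : MassLinear η κ H γ C) (i : Fin N) (hi : γ i ≠ 0) :
    Pervasive η κ i ∨ FlatFacet η κ i := by
  refine or_iff_not_imp_left.2 fun hpervasive => ?_
  simp only [Pervasive, not_forall, not_nonempty_iff_eq_empty] at hpervasive
  obtain ⟨j, hji, hdisj⟩ := hpervasive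
  exact hml.flatFacet hΔ hji.symm hi hdisj
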